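/- Every ℤ^p-action A on ℤ³ with nonzero fixed-point set is the linear part of a free affine ℤ^p-action on T³. -/

import Mathlib

/-!
Work over `ℚ`, with `V = ℚ³`, and first fix a single `g ≠ 1`. Some 1-cocycle `β` has
`β g ∉ range (ρ g - 1)`: if an invariant vector `w` lies outside this range, take `β = χ • w` for
a homomorphism `χ` to `ℚ` with `χ g ≠ 0`. Otherwise all invariant vectors lie in the range.
By Nakayama's lemma an invariant vector forces an invariant functional; it vanishes on the range,
hence on the invariant vectors, so the action is simultaneously upper triangular with diagonal
`1, d, 1`. Commutativity of the action leaves few possibilities, and in each of them an explicit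
polynomial cocycle works.

The cocycles form a finite-dimensional space. Take a basis `β j` of it, real numbers `τ j` that
together with `1` are linearly independent over `ℚ`, and `α = ∑ j, τ j • β j`. For every `g ≠ 1`
some rational functional `F` with `F ∘ ρ g = F` is nonzero on some `β j g`, so `F (α g)` is
irrational, whereas a fixed point of `x ↦ ρ g x + α g` on the torus would make it rational.
-/

open Module groupCohomology LinearMap Cardinal
open scoped Matrix

universe u v

section InvariantCovector

theorem coinvariantsKer_ne_top {K G V : Type*} [CommRing K] [CommGroup G] [AddCommGroup V]
    [Module K V] [Module.Finite K V] (ρ : Representation K G V) {v : V} (hv : v ≠ 0)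
    (hinv : v ∈ ρ.invariants) : Representation.Coinvariants.ker ρ ≠ ⊤ := by
  -- Over the commutative ring `K[G]`, the coinvariants vanish only if `I V = V` for the annihilator
  -- `I` of `v`; Nakayama then gives an element of `1 + I` that kills `V`, hence `v = 0`.
  intro htop
  let w : ρ.asModule := ρ.asModuleEquiv.symm v
  let I : Ideal (MonoidAlgebra K G) := Ideal.torsionOf _ _ w
  have hI (g : G) : MonoidAlgebra.of K G g - 1 ∈ I := by
    rw [Ideal.mem_torsionOf_iff, sub_smul, one_smul, ← ρ.asModuleEquiv_symm_map_rho,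
      (ρ.mem_invariants v).1 hinv, sub_self]
  have hker (x : V) (hx : x ∈ Representation.Coinvariants.ker ρ) :
      ρ.asModuleEquiv.symm x ∈ I • (⊤ : Submodule (MonoidAlgebra K G) ρ.asModule) := by
    let IV : Submodule (MonoidAlgebra K G) ρ.asModule := I • ⊤
    refine (Submodule.span_le (p := (IV.restrictScalars K).comap
      ρ.asModuleEquiv.symm.toLinearMap)).2 ?_ hx
    rintro _ ⟨⟨g, y⟩, rfl⟩
    have := Submodule.smul_mem_smul (hI g) (Submodule.mem_top (x := ρ.asModuleEquiv.symm y))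
    rwa [sub_smul, one_smul, ← ρ.asModuleEquiv_symm_map_rho, ← map_sub] at this
  have : Module.Finite (MonoidAlgebra K G) ρ.asModule := .of_restrictScalars_finite K _ _
  obtain ⟨r, hrI, hr⟩ := Submodule.exists_sub_one_mem_and_smul_eq_zero_of_fg_of_le_smul I ⊤
    Module.Finite.fg_top fun x _ => hker (ρ.asModuleEquiv x) (htop ▸ Submodule.mem_top)
  have hw : w = 0 := by
    simpa [sub_smul, hr w Submodule.mem_top] using (Ideal.mem_torsionOf_iff w (r - 1)).1 hrI
  exact hv (by simpa [w] using hw)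

theorem exists_invariant_dual {K G V : Type*} [Field K] [CommGroup G] [AddCommGroup V]
    [Module K V] [FiniteDimensional K V] (ρ : Representation K G V) {v : V} (hv : v ≠ 0)
    (hinv : v ∈ ρ.invariants) : ∃ φ : Dual K V, φ ≠ 0 ∧ ∀ g, φ ∘ₗ ρ g = φ := by
  obtain ⟨φ, hφ, hker⟩ := Submodule.exists_le_ker_of_lt_top _
    (coinvariantsKer_ne_top ρ hv hinv).lt_top
  refine ⟨φ, hφ, fun g => LinearMap.ext fun x => sub_eq_zero.1 ?_⟩
  rw [comp_apply, ← map_sub]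
  exact hker (Representation.Coinvariants.sub_mem_ker g x)

end InvariantCovector

section Cocycles

theorem finite_cocycles₁ {K G : Type u} [CommRing K] [IsNoetherianRing K] [Group G] [Group.FG G]
    (A : Rep.{v} K G) [Module.Finite K A] : Module.Finite K (cocycles₁ A) := by
  obtain ⟨S, hS⟩ := (Monoid.fg_def (M := G)).1 inferInstance
  let restrict : cocycles₁ A →ₗ[K] S → A := funLeft K A Subtype.val ∘ₗ (cocycles₁ A).subtype
  refine .of_injective restrict (ker_eq_bot.1 (ker_eq_bot'.2 fun β hβ => ?_))
  refine cocycles₁_ext fun g => ?_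
  induction (hS ▸ Submonoid.mem_top g : g ∈ Submonoid.closure (S : Set G))
    using Submonoid.closure_induction with
  | mem s hs => exact congrFun hβ ⟨s, hs⟩
  | one => exact cocycles₁_map_one β
  | mul g h _ _ hg hh =>
    rw [(mem_cocycles₁_iff β).1 β.2, hg, hh]
    exact (add_zero _).trans (map_zero _)

theorem smul_mem_cocycles₁ {K G : Type u} {V : Type v} [CommRing K] [Group G] [AddCommGroup V]
    [Module K V] {ρ : Representation K G V} (χ : Additive G →+ K) {w : V} (hw : w ∈ ρ.invariants) :
    (fun g => χ (.ofMul g) • w) ∈ cocycles₁ (Rep.of ρ) := by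
  refine (mem_cocycles₁_iff _).2 fun g h => ?_
  simp only [ofMul_mul, map_add, add_smul, map_smul, (ρ.mem_invariants w).1 hw g]
  exact add_comm _ _

variable {K G : Type u} {V : Type v} [Field K] [Group G] [AddCommGroup V] [Module K V]
  {ρ : Representation K G V}

-- With `N u = v` and `N v = 0`, so that `ρ g = exp (a g • N)` on the span of `u` and `v`, this is
-- `∫ exp (s N) u ds` over `0 ≤ s ≤ a g`.
theorem add_smul_mem_cocycles₁ [NeZero (2 : K)] {u v : V} {a : G → K}
    (ha : ∀ g h, a (g * h) = a g + a h) (hv : ∀ g, ρ g v = v) (hu : ∀ g, ρ g u = u + a g • v) :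
    (fun g => a g • u + (a g ^ 2 / 2) • v) ∈ cocycles₁ (Rep.of ρ) := by
  refine (mem_cocycles₁_iff _).2 fun g h => ?_
  simp only [map_add, map_smul, hv, hu, ha]
  match_scalars <;> field_simp <;> ring

-- On a one-parameter subgroup `exp (s N)` with `N w = u`, `N u = v`, `N v = 0` one has
-- `c = a ^ 2 / 2`, and this is `∫ exp (s N) w ds` over `0 ≤ s ≤ a g`.
theorem add_smul_add_smul_mem_cocycles₁ [NeZero (3 : K)] {u v w : V} {a c : G → K}
    (ha : ∀ g h, a (g * h) = a g + a h) (hc : ∀ g h, c (g * h) = c g + c h + a g * a h)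
    (hv : ∀ g, ρ g v = v) (hu : ∀ g, ρ g u = u + a g • v)
    (hw : ∀ g, ρ g w = w + a g • u + c g • v) :
    (fun g => a g • w + c g • u + (a g * c g - a g ^ 3 / 3) • v) ∈ cocycles₁ (Rep.of ρ) := by
  refine (mem_cocycles₁_iff _).2 fun g h => ?_
  simp only [map_add, map_smul, hv, hu, hw, ha, hc]
  match_scalars <;> field_simp <;> ring

end Cocycles

section AffinelyFree

variable {K G : Type u} {V : Type v} [Field K] [Group G] [AddCommGroup V] [Module K V]
  {ρ : Representation K G V} {g : G}

/-- Some affine action with linear part `ρ`, that is `x ↦ ρ h x + β h` for a 1-cocycle `β`, moves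
every point under `g`: the equation `ρ g x + β g = x` has no solution `x`. -/
def IsAffinelyFreeAt (ρ : Representation K G V) (g : G) : Prop :=
  ∃ β : G → V, β ∈ cocycles₁ (Rep.of ρ) ∧ β g ∉ range (ρ g - 1)

namespace IsAffinelyFreeAt

theorem of_invariant {w : V} (hw : w ∈ ρ.invariants) (hrange : w ∉ range (ρ g - 1))
    {χ : Additive G →+ K} (hχ : χ (.ofMul g) ≠ 0) : IsAffinelyFreeAt ρ g :=
  ⟨_, smul_mem_cocycles₁ χ hw, fun hmem => hrange ((Submodule.smul_mem_iff _ hχ).1 hmem)⟩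

theorem of_unipotent_pair [NeZero (2 : K)] {u v : V} {a : G → K} (hv : v ∈ ρ.invariants)
    (hv0 : v ≠ 0) (hu : ∀ h, ρ h u = u + a h • v) (hag : a g ≠ 0) (hrange : u ∉ range (ρ g - 1)) :
    IsAffinelyFreeAt ρ g := by
  have ha (g h : G) : a (g * h) = a g + a h := by
    refine smul_left_injective K hv0 (add_left_cancel (a := u) ?_)
    calc u + a (g * h) • v = ρ g (ρ h u) := by rw [← hu, map_mul, Module.End.mul_apply]
      _ = u + (a g + a h) • v := by
        rw [hu h, map_add, map_smul, hu g, hv g, add_smul, add_assoc]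
  have hvrange : v ∈ range (ρ g - 1) :=
    (Submodule.smul_mem_iff _ hag).1 ⟨u, by simp [hu g]⟩
  refine ⟨_, add_smul_mem_cocycles₁ ha hv hu, fun hmem => hrange ?_⟩
  rwa [Submodule.add_mem_iff_left _ (Submodule.smul_mem _ _ hvrange),
    Submodule.smul_mem_iff _ hag] at hmem

theorem of_unipotent_triple [NeZero (3 : K)] {u v w : V} {a c : G → K}
    (hind : LinearIndependent K ![u, v]) (hv : v ∈ ρ.invariants)
    (hu : ∀ h, ρ h u = u + a h • v) (hw : ∀ h, ρ h w = w + a h • u + c h • v)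
    (hwrange : w ∉ range (ρ g - 1)) (hg : a g = 0 → c g ≠ 0 ∧ u ∉ range (ρ g - 1)) :
    IsAffinelyFreeAt ρ g := by
  have hac (g h : G) : a (g * h) = a g + a h ∧ c (g * h) = c g + c h + a g * a h := by
    refine hind.eq_of_pair (add_left_cancel (a := w) ?_)
    calc w + (a (g * h) • u + c (g * h) • v) = ρ g (ρ h w) := by
          rw [← add_assoc, ← hw, map_mul, Module.End.mul_apply]
      _ = w + ((a g + a h) • u + (c g + c h + a g * a h) • v) := by
        rw [hw h, map_add, map_add, map_smul, map_smul, hw g, hu g, hv g]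
        module
  refine ⟨_, add_smul_add_smul_mem_cocycles₁ (fun g h => (hac g h).1) (fun g h => (hac g h).2)
    hv hu hw, fun hmem => ?_⟩
  by_cases hag : a g = 0
  · obtain ⟨hcg, hurange⟩ := hg hag
    exact hurange ((Submodule.smul_mem_iff _ hcg).1 (by simpa [hag] using hmem))
  · have hvrange : v ∈ range (ρ g - 1) :=
      (Submodule.smul_mem_iff _ hag).1 ⟨u, by simp [hu g]⟩
    have hurange : u ∈ range (ρ g - 1) := by
      have hsum : a g • u + c g • v ∈ range (ρ g - 1) := ⟨w, by simp [hw g, add_assoc]⟩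
      rwa [Submodule.add_mem_iff_left _ (Submodule.smul_mem _ _ hvrange),
        Submodule.smul_mem_iff _ hag] at hsum
    rw [Submodule.add_mem_iff_left _ (Submodule.smul_mem _ _ hvrange),
      Submodule.add_mem_iff_left _ (Submodule.smul_mem _ _ hurange),
      Submodule.smul_mem_iff _ hag] at hmem
    exact hwrange hmem

end IsAffinelyFreeAt

end AffinelyFree

section TriangularForm

variable {K G : Type u} {V : Type v} [Field K] [AddCommGroup V] [Module K V]

/-- In the basis `B`, every `ρ h` acts by the matrix `!![1, a h, c h; 0, d h, b h; 0, 0, 1]`. -/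
structure HasTriangularForm [Group G] (ρ : Representation K G V) (B : Basis (Fin 3) K V)
    (a b c d : G → K) : Prop where
  apply_zero (h : G) : ρ h (B 0) = B 0
  apply_one (h : G) : ρ h (B 1) = a h • B 0 + d h • B 1
  apply_two (h : G) : ρ h (B 2) = c h • B 0 + b h • B 1 + B 2

theorem exists_basis_zero_eq_and_coord_two_eq (hV : finrank K V = 3) {v : V} (hv : v ≠ 0)
    {φ : Dual K V} (hφ : φ ≠ 0) (hφv : φ v = 0) :
    ∃ B : Basis (Fin 3) K V, B 0 = v ∧ B.coord 2 = φ := by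
  have : FiniteDimensional K V := .of_finrank_pos (by lia)
  obtain ⟨s, hs⟩ := LinearMap.surjective hφ 1
  have hker : 1 < finrank K (ker φ) := by
    have := Dual.finrank_ker_add_one_of_ne_zero hφ
    lia
  obtain ⟨u, hvu⟩ := exists_linearIndependent_pair_of_one_lt_finrank hker
    (x := ⟨v, hφv⟩) fun h => hv (congrArg Subtype.val h)
  let pair : Fin 2 → V := (ker φ).subtype ∘ ![⟨v, hφv⟩, u]
  have hspan : Submodule.span K (Set.range pair) ≤ ker φ :=
    Submodule.span_le.2 (Set.range_subset_iff.2 fun _ => Subtype.prop _)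
  have hind : LinearIndependent K (Fin.snoc pair s : Fin 3 → V) :=
    (hvu.map' _ (Submodule.ker_subtype _)).finSnoc fun hmem =>
      one_ne_zero (hs.symm.trans (hspan hmem))
  let B := basisOfLinearIndependentOfCardEqFinrank hind (by simp [hV])
  have hB : ⇑B = Fin.snoc pair s := coe_basisOfLinearIndependentOfCardEqFinrank hind _
  have h0 : φ (B 0) = 0 := (congrArg φ (congrFun hB 0)).trans hφv
  have h1 : φ (B 1) = 0 := (congrArg φ (congrFun hB 1)).trans u.2
  have h2 : φ (B 2) = 1 := (congrArg φ (congrFun hB 2)).trans hs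
  refine ⟨B, congrFun hB 0, B.ext fun i => ?_⟩
  fin_cases i
  · simp [h0]
  · simp [h1]
  · simp [h2]

theorem exists_hasTriangularForm [Group G] {ρ : Representation K G V} {B : Basis (Fin 3) K V}
    (hinv : B 0 ∈ ρ.invariants) (hdual : ∀ h, B.coord 2 ∘ₗ ρ h = B.coord 2) :
    ∃ a b c d : G → K, HasTriangularForm ρ B a b c d := by
  have hcoord (h : G) (i : Fin 3) : B.repr (ρ h (B i)) 2 = B.repr (B i) 2 :=
    LinearMap.congr_fun (hdual h) (B i)
  have hexpand (h : G) (i : Fin 3) : ρ h (B i) = B.repr (ρ h (B i)) 0 • B 0 +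
      B.repr (ρ h (B i)) 1 • B 1 + B.repr (B i) 2 • B 2 := by
    rw [← hcoord, ← Fin.sum_univ_three (fun j => B.repr (ρ h (B i)) j • B j), B.sum_repr]
  exact ⟨fun h => B.repr (ρ h (B 1)) 0, fun h => B.repr (ρ h (B 2)) 1,
    fun h => B.repr (ρ h (B 2)) 0, fun h => B.repr (ρ h (B 1)) 1, hinv,
    fun h => by simpa using hexpand h 1, fun h => by simpa using hexpand h 2⟩

namespace HasTriangularForm

section Group

variable [Group G] {ρ : Representation K G V} {B : Basis (Fin 3) K V} {a b c d : G → K} {g : G}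

theorem mem_range_sub_one_iff (hT : HasTriangularForm ρ B a b c d) {y : V} :
    y ∈ range (ρ g - 1) ↔ ∃ s t : K, B.repr y 0 = a g * s + c g * t ∧
      B.repr y 1 = (d g - 1) * s + b g * t ∧ B.repr y 2 = 0 := by
  have happly (r s t : K) : (ρ g - 1) (r • B 0 + s • B 1 + t • B 2) =
      (a g * s + c g * t) • B 0 + ((d g - 1) * s + b g * t) • B 1 := by
    simp only [LinearMap.sub_apply, Module.End.one_apply, map_add, map_smul, hT.apply_zero,
      hT.apply_one, hT.apply_two]
    module
  constructor
  · rintro ⟨x, rfl⟩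
    rw [← B.sum_repr x, Fin.sum_univ_three, happly]
    exact ⟨B.repr x 1, B.repr x 2, by simp, by simp, by simp⟩
  · rintro ⟨s, t, h0, h1, h2⟩
    refine ⟨(0 : K) • B 0 + s • B 1 + t • B 2, ?_⟩
    conv_rhs => rw [← B.sum_repr y, Fin.sum_univ_three, h0, h1, h2, zero_smul, add_zero]
    exact happly 0 s t

theorem basis_one_notMem_range (hT : HasTriangularForm ρ B a b c d) (ha : a g = 0) (hd : d g = 1)
    (h0 : B 0 ∈ range (ρ g - 1)) : B 1 ∉ range (ρ g - 1) := by
  rw [hT.mem_range_sub_one_iff] at h0 ⊢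
  obtain ⟨s, t, h00, -, -⟩ := h0
  rintro ⟨s', t', h10, h11, -⟩
  have hct : c g * t = 1 := by simpa [ha] using h00.symm
  have hct' : c g * t' = 0 := by simpa [ha] using h10.symm
  have hbt' : b g * t' = 1 := by simpa [hd] using h11.symm
  refine one_ne_zero (α := K) ?_
  calc (1 : K) = (c g * t) * (b g * t') := by rw [hct, hbt', one_mul]
    _ = (b g * t) * (c g * t') := by ring
    _ = 0 := by rw [hct', mul_zero]

theorem isAffinelyFreeAt_of_trivial_quotient [NeZero (2 : K)] (hT : HasTriangularForm ρ B a b c d)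
    (hb : ∀ h, b h = 0) (hd : ∀ h, d h = 1) (h0 : B 0 ∈ range (ρ g - 1)) :
    IsAffinelyFreeAt ρ g := by
  obtain ⟨s, t, hst, -, -⟩ := hT.mem_range_sub_one_iff.1 h0
  by_cases hag : a g = 0
  · refine .of_unipotent_pair (u := B 2) (v := B 0) (a := c) hT.apply_zero (B.ne_zero 0)
      (fun h => ?_) ?_ ?_
    · rw [hT.apply_two, hb, zero_smul, add_zero, add_comm]
    · intro hcg
      simp [hag, hcg] at hst
    · simp [hT.mem_range_sub_one_iff]
  · refine .of_unipotent_pair (u := B 1) (v := B 0) hT.apply_zero (B.ne_zero 0)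
      (fun h => ?_) hag ?_
    · rw [hT.apply_one, hd, one_smul, add_comm]
    · simp [hT.mem_range_sub_one_iff, hb, hd]

end Group

section CommGroup

variable [CommGroup G] {ρ : Representation K G V} {B : Basis (Fin 3) K V} {a b c d : G → K} {g : G}

theorem comm_relations (hT : HasTriangularForm ρ B a b c d) (g h : G) :
    a g * (1 - d h) = a h * (1 - d g) ∧ b g * (1 - d h) = b h * (1 - d g) ∧
      a g * b h = a h * b g := by
  have hcomm (x : V) : ρ g (ρ h x) = ρ h (ρ g x) := by
    rw [← Module.End.mul_apply, ← map_mul, mul_comm, map_mul, Module.End.mul_apply]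
  have h1 : a h + d h * a g = a g + d g * a h := by
    simpa [hT.apply_zero, hT.apply_one] using congrArg (B.repr · 0) (hcomm (B 1))
  have h20 : c h + b h * a g + c g = c g + b g * a h + c h := by
    simpa [hT.apply_zero, hT.apply_one, hT.apply_two] using
      congrArg (B.repr · 0) (hcomm (B 2))
  have h21 : b h * d g + b g = b g * d h + b h := by
    simpa [hT.apply_zero, hT.apply_one, hT.apply_two] using
      congrArg (B.repr · 1) (hcomm (B 2))
  exact ⟨by linear_combination -h1, by linear_combination h21, by linear_combination h20⟩

theorem isAffinelyFreeAt_of_ne_one [NeZero (2 : K)] (hT : HasTriangularForm ρ B a b c d)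
    {k : G} (hk : d k ≠ 1) (h0 : B 0 ∈ range (ρ g - 1)) : IsAffinelyFreeAt ρ g := by
  have hk' : 1 - d k ≠ 0 := sub_ne_zero.2 hk.symm
  let r := b k / (1 - d k)
  have hr (h : G) : b h = r * (1 - d h) := by
    rw [div_mul_eq_mul_div, eq_div_iff hk']
    exact (hT.comm_relations h k).2.1
  refine .of_unipotent_pair (u := B 2 + r • B 1) (v := B 0) (a := fun h => c h + r * a h)
    hT.apply_zero (B.ne_zero 0) (fun h => ?_) (fun hzero => ?_) ?_
  · rw [map_add, map_smul, hT.apply_one, hT.apply_two, hr]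
    module
  · obtain ⟨s, t, h00, h01, -⟩ := hT.mem_range_sub_one_iff.1 h0
    have hprod : a g * (s - r * t) = 1 := by
      simp only [Basis.repr_self, Finsupp.single_eq_same] at h00
      linear_combination -h00 - t * hzero
    have hdiag : (1 - d g) * (s - r * t) = 0 := by
      simp [hr] at h01
      linear_combination h01
    refine hk' ?_
    linear_combination (s - r * t) * (hT.comm_relations g k).1 + a k * hdiag -
      (1 - d k) * hprod
  · simp [hT.mem_range_sub_one_iff]

theorem isAffinelyFreeAt_of_heisenberg [NeZero (3 : K)] (hT : HasTriangularForm ρ B a b c d)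
    (hd : ∀ h, d h = 1) {k l : G} (hk : a k ≠ 0) (hl : b l ≠ 0) (h0 : B 0 ∈ range (ρ g - 1)) :
    IsAffinelyFreeAt ρ g := by
  let κ := b k / a k
  have hb (h : G) : b h = a h * κ := by
    rw [← mul_div_assoc, eq_div_iff hk, ← (hT.comm_relations k h).2.2, mul_comm]
  have hκ : κ ≠ 0 := right_ne_zero_of_mul (hb l ▸ hl)
  refine .of_unipotent_triple (u := κ • B 1) (v := κ • B 0) (w := B 2) (a := a)
    (c := fun h => c h / κ) (LinearIndependent.pair_iff.2 fun s t hst => ⟨?_, ?_⟩)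
    (Submodule.smul_mem _ κ hT.apply_zero) (fun h => ?_) (fun h => ?_) ?_ (fun hag => ⟨?_, ?_⟩)
  · simpa [hκ] using congrArg (B.repr · 1) hst
  · simpa [hκ] using congrArg (B.repr · 0) hst
  · rw [map_smul, hT.apply_one, hd]
    module
  · rw [hT.apply_two, smul_smul, smul_smul, div_mul_cancel₀ _ hκ, ← hb]
    module
  · simp [hT.mem_range_sub_one_iff]
  · obtain ⟨s, t, hst, -, -⟩ := hT.mem_range_sub_one_iff.1 h0
    intro hcg
    simp_all
  · simp [hT.mem_range_sub_one_iff, hb, hag, hd, hκ]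

theorem isAffinelyFreeAt [NeZero (2 : K)] [NeZero (3 : K)] (hT : HasTriangularForm ρ B a b c d)
    (hrange : ρ.invariants ≤ range (ρ g - 1)) : IsAffinelyFreeAt ρ g := by
  have h0 : B 0 ∈ range (ρ g - 1) := hrange hT.apply_zero
  by_cases! hd : ∃ k, d k ≠ 1
  · obtain ⟨k, hk⟩ := hd
    exact hT.isAffinelyFreeAt_of_ne_one hk h0
  by_cases! hb : ∃ l, b l ≠ 0
  · obtain ⟨l, hl⟩ := hb
    have ha : ∃ k, a k ≠ 0 := by
      by_contra! ha
      have h1 : B 1 ∈ ρ.invariants := fun h => by simp [hT.apply_one, ha, hd]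
      exact hT.basis_one_notMem_range (ha g) (hd g) h0 (hrange h1)
    obtain ⟨k, hk⟩ := ha
    exact hT.isAffinelyFreeAt_of_heisenberg hd hk hl h0
  · exact hT.isAffinelyFreeAt_of_trivial_quotient hb hd h0

end CommGroup

end HasTriangularForm

theorem isAffinelyFreeAt_of_finrank_eq_three [CommGroup G] [NeZero (2 : K)] [NeZero (3 : K)]
    (ρ : Representation K G V) (hV : finrank K V = 3) {v : V} (hv : v ≠ 0)
    (hinv : v ∈ ρ.invariants) {χ : Additive G →+ K} {g : G} (hχ : χ (.ofMul g) ≠ 0) :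
    IsAffinelyFreeAt ρ g := by
  by_cases hrange : ρ.invariants ≤ range (ρ g - 1)
  · have : FiniteDimensional K V := .of_finrank_pos (by lia)
    obtain ⟨φ, hφ, hφρ⟩ := exists_invariant_dual ρ hv hinv
    have hφv : φ v = 0 := by
      obtain ⟨x, rfl⟩ := hrange hinv
      simpa [sub_eq_zero] using LinearMap.congr_fun (hφρ g) x
    obtain ⟨B, rfl, rfl⟩ := exists_basis_zero_eq_and_coord_two_eq hV hv hφ hφv
    obtain ⟨a, b, c, d, hT⟩ := exists_hasTriangularForm hinv hφρ
    exact hT.isAffinelyFreeAt hrange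
  · obtain ⟨w, hw, hwrange⟩ := SetLike.not_le_iff_exists.1 hrange
    exact .of_invariant hw hwrange hχ

end TriangularForm

section FreeAffineActions

theorem exists_linearIndependent_cons_one {K L : Type*} [Field K] [Field L] [Algebra K L]
    (hrank : ℵ₀ ≤ Module.rank K L) (m : ℕ) :
    ∃ τ : Fin m → L, LinearIndependent K (Fin.cons 1 τ : Fin (m + 1) → L) := by
  obtain ⟨f, hf⟩ := exists_linearIndependent_of_le_rank
    ((Cardinal.natCast_le_aleph0 (n := m + 1)).trans hrank)
  let scale := LinearMap.mulLeft K (f 0)⁻¹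
  have hscale : ker scale = ⊥ :=
    ker_eq_bot.2 (mul_right_injective₀ (inv_ne_zero (hf.ne_zero 0)))
  have hone : (scale ∘ f) 0 = 1 := inv_mul_cancel₀ (hf.ne_zero 0)
  refine ⟨Fin.tail (scale ∘ f), ?_⟩
  rw [← hone, Fin.cons_self_tail]
  exact hf.map' scale hscale

variable {K G : Type u} {V : Type v} [Field K] [Group G] [AddCommGroup V] [Module K V]
  {ρ : Representation K G V} {g : G}

theorem IsAffinelyFreeAt.exists_dual (hg : IsAffinelyFreeAt ρ g) {ι : Type*}
    (b : Basis ι K (cocycles₁ (Rep.of ρ))) :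
    ∃ F : Dual K V, F ∘ₗ ρ g = F ∧ ∃ j, F (b j g) ≠ 0 := by
  obtain ⟨β, hβ, hβg⟩ := hg
  obtain ⟨F, hF, hker⟩ := Submodule.exists_le_ker_of_notMem hβg
  have hinv : F ∘ₗ ρ g = F := by
    refine LinearMap.ext fun x => sub_eq_zero.1 ?_
    rw [LinearMap.comp_apply, ← map_sub]
    exact hker ⟨x, rfl⟩
  refine ⟨F, hinv, ?_⟩
  by_contra! hzero
  let evalDual := F ∘ₗ LinearMap.proj g ∘ₗ (cocycles₁ (Rep.of ρ)).subtype
  have heval : evalDual = 0 := b.ext hzero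
  exact hF (LinearMap.congr_fun heval ⟨β, hβ⟩)

/-- The representation on column vectors given by a homomorphism into matrices. -/
def matrixRep {K G n : Type*} [CommRing K] [Monoid G] [Fintype n] [DecidableEq n]
    (A : G →* Matrix n n K) : Representation K G (n → K) :=
  (Matrix.toLinAlgEquiv' : Matrix n n K ≃ₐ[K] _).toMonoidHom.comp A

theorem mulVec_add_sum_ne_add {K L n : Type*} [Field K] [Field L] [Algebra K L] [Fintype n]
    {M : Matrix n n K} {f : n → K} (hf : f ᵥ* M = f) {m : ℕ} {τ : Fin m → L}
    (hτ : LinearIndependent K (Fin.cons 1 τ : Fin (m + 1) → L)) {β : Fin m → n → K}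
    (hβ : ∃ j, f ⬝ᵥ β j ≠ 0) (x : n → L) (N : n → K) :
    M.map (algebraMap K L) *ᵥ x + ∑ j, τ j • (algebraMap K L ∘ β j) ≠ x + algebraMap K L ∘ N := by
  intro h
  have hdot := congrArg ((algebraMap K L ∘ f) ⬝ᵥ ·) h
  have hfM : (algebraMap K L ∘ f) ᵥ* M.map (algebraMap K L) = algebraMap K L ∘ f := by
    ext i
    rw [← RingHom.map_vecMul, hf, Function.comp_apply]
  simp only [dotProduct_add, Matrix.dotProduct_mulVec, hfM, dotProduct_sum, dotProduct_smul,
    ← RingHom.map_dotProduct, add_right_inj] at hdot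
  obtain ⟨j, hj⟩ := hβ
  refine hj ?_
  have hcoeff := Fintype.linearIndependent_iff.1 hτ
    (Fin.cons (-(f ⬝ᵥ N)) fun j => f ⬝ᵥ β j) ?_ j.succ
  · simpa using hcoeff
  · rw [Fin.sum_univ_succ]
    simp [Algebra.smul_def, mul_comm, ← hdot]

theorem exists_affine_action_of_forall_isAffinelyFreeAt {K G : Type u} {L n : Type*} [Field K]
    [Field L] [Algebra K L] [Group G] [Group.FG G] [Fintype n] [DecidableEq n]
    (hrank : ℵ₀ ≤ Module.rank K L) (A : G →* Matrix n n K)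
    (hA : ∀ g ≠ 1, IsAffinelyFreeAt (matrixRep A) g) :
    ∃ α : G → n → L,
      (∀ g h, α (g * h) = α g + (A g).map (algebraMap K L) *ᵥ α h) ∧
      ∀ g ≠ 1, ∀ (x : n → L) (N : n → K),
        (A g).map (algebraMap K L) *ᵥ x + α g ≠ x + algebraMap K L ∘ N := by
  have := finite_cocycles₁ (Rep.of (matrixRep A))
  let b := finBasis K (cocycles₁ (Rep.of (matrixRep A)))
  let β (j) (g : G) : n → K := b j g
  have hβ (j) (g h : G) : β j (g * h) = A g *ᵥ β j h + β j g :=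
    (mem_cocycles₁_iff _).1 (b j).2 g h
  obtain ⟨τ, hτ⟩ := exists_linearIndependent_cons_one hrank _
  refine ⟨fun g => ∑ j, τ j • (algebraMap K L ∘ β j g), fun g h => ?_, fun g hg x N => ?_⟩
  · simp only [Matrix.mulVec_sum, Matrix.mulVec_smul, ← Finset.sum_add_distrib, ← smul_add]
    refine Finset.sum_congr rfl fun j _ => congrArg (τ j • ·) (funext fun i => ?_)
    simp [hβ, ← RingHom.map_mulVec, add_comm]
  · obtain ⟨F, hF, hFβ⟩ := (hA g hg).exists_dual b
    obtain ⟨f, rfl⟩ := (dotProductEquiv K n).surjective F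
    have hf : f ᵥ* A g = f := dotProduct_eq _ _ fun w => by
      rw [← Matrix.dotProduct_mulVec]
      exact LinearMap.congr_fun hF w
    exact mulVec_add_sum_ne_add hf hτ hFβ x N

end FreeAffineActions

theorem stmt17_general {K G : Type u} {L : Type*} [Field K] [NeZero (2 : K)] [NeZero (3 : K)]
    [Field L] [Algebra K L] (hrank : ℵ₀ ≤ Module.rank K L) [CommGroup G] [Group.FG G]
    (hG : ∀ g : G, g ≠ 1 → ∃ χ : Additive G →+ K, χ (.ofMul g) ≠ 0)
    (A : G →* Matrix (Fin 3) (Fin 3) K) (hfix : ∃ v : Fin 3 → K, v ≠ 0 ∧ ∀ g, A g *ᵥ v = v) :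
    ∃ α : G → Fin 3 → L,
      (∀ g h, α (g * h) = α g + (A g).map (algebraMap K L) *ᵥ α h) ∧
      ∀ g ≠ 1, ∀ (x : Fin 3 → L) (N : Fin 3 → K),
        (A g).map (algebraMap K L) *ᵥ x + α g ≠ x + algebraMap K L ∘ N := by
  obtain ⟨v, hv, hinv⟩ := hfix
  refine exists_affine_action_of_forall_isAffinelyFreeAt hrank A fun g hg => ?_
  obtain ⟨χ, hχ⟩ := hG g hg
  exact isAffinelyFreeAt_of_finrank_eq_three (matrixRep A) (finrank_fin_fun K) hv hinv hχ

theorem exists_addMonoidHom_rat_ne_zero {ι : Type*} (ℓ : Multiplicative (ι → ℤ)) (hℓ : ℓ ≠ 1) :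
    ∃ χ : Additive (Multiplicative (ι → ℤ)) →+ ℚ, χ (.ofMul ℓ) ≠ 0 := by
  obtain ⟨i, hi⟩ := Function.ne_iff.1 hℓ
  exact ⟨(Int.castAddHom ℚ).comp (Pi.evalAddMonoidHom _ i), Int.cast_ne_zero.2 hi⟩

/-- STATEMENT 16: Every `ℤ^p`-action `A` on `ℤ³` with nonzero fixed-point set is the linear
part of a free affine `ℤ^p`-action on `T² = ℝ³/ℤ³`: there is a translation part
`α : ℤ^p → ℝ³` which is a 1-cocycle over `A` modulo `ℤ³` such that `x ↦ A(ℓ)x + α(ℓ)`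
has no fixed point on the torus for `ℓ ≠ 0`. -/
theorem stmt17 (p : ℕ)
    (A : (Fin p → ℤ) → Matrix (Fin 3) (Fin 3) ℤ)
    (hhom : ∀ ℓ ℓ', A (ℓ + ℓ') = A ℓ * A ℓ')
    (h0 : A 0 = 1)
    (hunit : ∀ ℓ, IsUnit (A ℓ).det)
    (hfix : ∃ v : Fin 3 → ℤ, v ≠ 0 ∧ ∀ ℓ, (A ℓ).mulVec v = v) :
    ∃ α : (Fin p → ℤ) → (Fin 3 → ℝ),
      (∀ ℓ ℓ', ∃ N : Fin 3 → ℤ,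
        α (ℓ + ℓ') = α ℓ + ((A ℓ).map (Int.cast : ℤ → ℝ)).mulVec (α ℓ')
          + fun i => ((N i : ℤ) : ℝ)) ∧
      (∀ ℓ : Fin p → ℤ, ℓ ≠ 0 → ∀ x : Fin 3 → ℝ,
        ¬ ∃ N : Fin 3 → ℤ,
          ((A ℓ).map (Int.cast : ℤ → ℝ)).mulVec x + α ℓ = x + fun i => ((N i : ℤ) : ℝ)) := by
  obtain ⟨v, hv, hinv⟩ := hfix
  let A₀ : Multiplicative (Fin p → ℤ) →* Matrix (Fin 3) (Fin 3) ℤ := ⟨⟨A, h0⟩, hhom⟩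
  let A' := (Int.castRingHom ℚ).mapMatrix.toMonoidHom.comp A₀
  have hA' (ℓ) : (A' ℓ).map (algebraMap ℚ ℝ) = (A ℓ).map (Int.cast : ℤ → ℝ) :=
    Matrix.ext fun _ _ => Rat.cast_intCast _
  have hv' : (Int.cast ∘ v : Fin 3 → ℚ) ≠ 0 := fun h =>
    hv (funext fun i => Int.cast_injective (congrFun h i))
  have hinv' (ℓ) : A' ℓ *ᵥ (Int.cast ∘ v) = Int.cast ∘ v := funext fun i =>
    ((Int.castRingHom ℚ).map_mulVec (A ℓ) v i).symm.trans
      (congrArg (Int.castRingHom ℚ) (congrFun (hinv ℓ) i))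
  obtain ⟨α, hα, hfree⟩ := stmt17_general (Real.rank_rat_real ▸ aleph0_le_continuum)
    exists_addMonoidHom_rat_ne_zero A' ⟨_, hv', hinv'⟩
  simp only [hA'] at hα hfree
  refine ⟨α, fun ℓ ℓ' => ⟨0, ?_⟩, fun ℓ hℓ x ⟨N, hN⟩ => ?_⟩
  · exact (hα ℓ ℓ').trans (by ext; simp)
  · exact hfree ℓ hℓ x (Int.cast ∘ N) (hN.trans (by ext; simp))
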